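/- Let β > 0, τ ∈ (0, β²), let φ: ℝ → ℝ≥0 be convex, non-increasing and τ-discrepant, and suppose (1+β²)τ/(β²−τ) ≤ U* ≤ 1 and 0 < u ≤ 1. Fix m > 0 with φ'(m) ≤ 0, φ'(−m) < 0. Then (1+β²)φ'(−m)U* − (1+β²)φ'(m)u − (φ'(m)+φ'(−m))U*·u ≤ 0. -/

import Mathlib

/-!
With `c = 1 + β²`, `p = φ'(m)` and `q = φ'(-m)`, the left-hand side factors as
`U* (c - u) q - u (c + U*) p`. Since `q` is negative and `p` is at least `τ q`, it is nonpositive as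
soon as the first weight `U* (c - u)` is at least `τ` times the second weight `u (c + U*)`. This
follows by multiplying `U* / (c + U*) ≥ τ / β²`, which is the lower bound on `U*` rearranged, with
`(c - u) / u ≥ β²`, which comes from `u ≤ 1`. Both are used with denominators cleared.
-/

section OrderedRing

variable {R : Type*} [CommRing R] [PartialOrder R] [IsOrderedRing R] {τ b p q u v w x y U : R}

theorem mul_le_mul_of_mul_le_of_nonpos (hq : q ≤ 0) (hqp : τ * q ≤ p) (hy : 0 ≤ y)
    (hyx : τ * y ≤ x) : x * q ≤ y * p :=
  calc
    x * q ≤ τ * y * q := mul_le_mul_of_nonpos_right hyx hq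
    _ = y * (τ * q) := by ring
    _ ≤ y * p := mul_le_mul_of_nonneg_left hqp hy

-- Read as a product of ratio bounds: `τ / b ≤ U / w` and `b ≤ v / u` give `τ ≤ U * v / (u * w)`.
theorem mul_mul_le_mul_of_mul_le_mul_of_mul_le (hU : 0 ≤ U) (hu : 0 ≤ u)
    (hwU : τ * w ≤ b * U) (huv : b * u ≤ v) : τ * (u * w) ≤ U * v :=
  calc
    τ * (u * w) = u * (τ * w) := by ring
    _ ≤ u * (b * U) := mul_le_mul_of_nonneg_left hwU hu
    _ = U * (b * u) := by ring
    _ ≤ U * v := mul_le_mul_of_nonneg_left huv hU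

end OrderedRing

section OrderedField

variable {K : Type*} [Field K] [LinearOrder K] [IsStrictOrderedRing K] {b τ U u p q : K}

theorem mul_div_sub_le_iff_mul_add_le_mul (c : K) (hτb : τ < b) :
    c * τ / (b - τ) ≤ U ↔ τ * (c + U) ≤ b * U := by
  rw [div_le_iff₀ (sub_pos.mpr hτb)]
  constructor <;> intro h <;> linarith

theorem fbeta_calibration_case1_general (hτ : 0 ≤ τ) (hτb : τ < b)
    (hU : (1 + b) * τ / (b - τ) ≤ U) (hu0 : 0 ≤ u) (hu1 : u ≤ 1) (hq : q ≤ 0) (hqp : τ * q ≤ p) :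
    (1 + b) * q * U - (1 + b) * p * u - (p + q) * U * u ≤ 0 := by
  have hb : 0 ≤ 1 + b := by linarith
  have hU0 : 0 ≤ U := (div_nonneg (mul_nonneg hb hτ) (sub_pos.mpr hτb).le).trans hU
  have hτU : τ * (1 + b + U) ≤ b * U := (mul_div_sub_le_iff_mul_add_le_mul _ hτb).mp hU
  have hbu : b * u ≤ 1 + b - u := by linarith [mul_le_of_le_one_right hb hu1]
  have hweights : τ * (u * (1 + b + U)) ≤ U * (1 + b - u) :=
    mul_mul_le_mul_of_mul_le_mul_of_mul_le hU0 hu0 hτU hbu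
  calc
    (1 + b) * q * U - (1 + b) * p * u - (p + q) * U * u
        = U * (1 + b - u) * q - u * (1 + b + U) * p := by ring
    _ ≤ 0 := sub_nonpos.mpr <|
      mul_le_mul_of_mul_le_of_nonpos hq hqp (mul_nonneg hu0 (add_nonneg hb hU0)) hweights

end OrderedField

/-- sign computation at the heart of the F_β-calibration proof (case 1). -/
theorem fbeta_calibration_case1
    (β τ : ℝ) (hβ : 0 < β) (hτ0 : 0 < τ) (hτβ : τ < β ^ 2)
    (φ φ' : ℝ → ℝ) (hφnn : ∀ t, 0 ≤ φ t)
    (hconv : ConvexOn ℝ Set.univ φ) (hanti : Antitone φ)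
    (hderiv : ∀ t ≠ (0 : ℝ), HasDerivAt φ (φ' t) t)
    (Ustar u : ℝ)
    (hU1 : (1 + β ^ 2) * τ / (β ^ 2 - τ) ≤ Ustar) (hU2 : Ustar ≤ 1)
    (hu0 : 0 < u) (hu1 : u ≤ 1)
    (m : ℝ) (hm : 0 < m) (hpos : φ' m ≤ 0) (hneg : φ' (-m) < 0)
    (hdisc : τ * φ' (-m) ≤ φ' m) :
    (1 + β ^ 2) * φ' (-m) * Ustar - (1 + β ^ 2) * φ' m * u
      - (φ' m + φ' (-m)) * Ustar * u ≤ 0 :=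
  fbeta_calibration_case1_general hτ0.le hτβ hU1 hu0.le hu1 hneg.le hdisc
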